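/- Let G be a finite simple graph on vertex set V and F ⊆ E(G). Suppose F' has minimum size and F'' has maximum size among all edge sets of the form F Δ ∇_G(W) with W ⊆ V (symmetric difference of F with a cut of G), i.e., among the coset F + C^⊥(G) of the cut space. Then for every vertex v, d_{F'}(v) ≤ d_G(v) − d_{F'}(v), and d_{F''}(v) ≥ d_G(v) − d_{F''}(v). -/

import Mathlib

/-- The cut `∇_G(W)`: edges of `G` with exactly one endpoint in `W`. -/
def cutEdges {n : ℕ} (G : SimpleGraph (Fin n)) (W : Set (Fin n)) : Set (Sym2 (Fin n)) :=
  {e | ∃ x y : Fin n, e = s(x, y) ∧ G.Adj x y ∧ x ∈ W ∧ y ∉ W}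

/-- The degree of a vertex `v` in an edge set `F`. -/
noncomputable def degOf {n : ℕ} (F : Set (Sym2 (Fin n))) (v : Fin n) : ℕ :=
  {e ∈ F | v ∈ e}.ncard

theorem mem_cutEdges_mk {n : ℕ} (G : SimpleGraph (Fin n)) (W : Set (Fin n)) (a b : Fin n) :
    s(a, b) ∈ cutEdges G W ↔ G.Adj a b ∧ ((a ∈ W ∧ b ∉ W) ∨ (b ∈ W ∧ a ∉ W)) := by
  constructor
  · rintro ⟨x, y, he, hadj, hx, hy⟩
    rcases Sym2.eq_iff.1 he with ⟨rfl, rfl⟩ | ⟨rfl, rfl⟩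
    · exact ⟨hadj, Or.inl ⟨hx, hy⟩⟩
    · exact ⟨hadj.symm, Or.inr ⟨hx, hy⟩⟩
  · rintro ⟨hadj, ⟨h1, h2⟩ | ⟨h1, h2⟩⟩
    · exact ⟨a, b, rfl, hadj, h1, h2⟩
    · exact ⟨b, a, Sym2.eq_swap, hadj.symm, h1, h2⟩

theorem cutEdges_symmDiff {n : ℕ} (G : SimpleGraph (Fin n)) (W U : Set (Fin n)) :
    cutEdges G (symmDiff W U) = symmDiff (cutEdges G W) (cutEdges G U) := by
  ext e
  induction e using Sym2.ind with
  | _ a b =>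
    simp only [Set.mem_symmDiff, mem_cutEdges_mk]
    tauto

theorem cutEdges_singleton {n : ℕ} (G : SimpleGraph (Fin n)) (v : Fin n) :
    cutEdges G {v} = {e ∈ G.edgeSet | v ∈ e} := by
  ext e
  induction e using Sym2.ind with
  | _ a b =>
    simp only [mem_cutEdges_mk, Set.mem_singleton_iff, Set.mem_setOf_eq, SimpleGraph.mem_edgeSet,
      Sym2.mem_iff]
    constructor
    · rintro ⟨h, ⟨h1, -⟩ | ⟨h1, -⟩⟩
      · exact ⟨h, Or.inl h1.symm⟩
      · exact ⟨h, Or.inr h1.symm⟩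
    · rintro ⟨h, rfl | rfl⟩
      · exact ⟨h, Or.inl ⟨rfl, h.ne.symm⟩⟩
      · exact ⟨h, Or.inr ⟨rfl, h.ne⟩⟩

theorem ncard_symmDiff_cut_singleton {n : ℕ} (G : SimpleGraph (Fin n))
    (H : Set (Sym2 (Fin n))) (hH : H ⊆ G.edgeSet) (v : Fin n) :
    (symmDiff H (cutEdges G {v})).ncard + 2 * degOf H v = H.ncard + degOf G.edgeSet v := by
  have hC : degOf G.edgeSet v = (cutEdges G {v}).ncard := by
    rw [cutEdges_singleton]; rfl
  have hI : degOf H v = (H ∩ cutEdges G {v}).ncard := by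
    rw [cutEdges_singleton]
    unfold degOf
    congr 1
    ext e
    exact ⟨fun h => ⟨h.1, hH h.1, h.2⟩, fun h => ⟨h.1, h.2.2⟩⟩
  rw [hC, hI]
  generalize cutEdges G {v} = C
  have h1 := Set.ncard_inter_add_ncard_diff_eq_ncard H C (Set.toFinite _)
  have h2 := Set.ncard_inter_add_ncard_diff_eq_ncard C H (Set.toFinite _)
  have h3 : (symmDiff H C).ncard = (H \ C).ncard + (C \ H).ncard := by
    rw [Set.symmDiff_def]
    exact Set.ncard_union_eq disjoint_sdiff_sdiff (Set.toFinite _) (Set.toFinite _)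
  rw [Set.inter_comm] at h2
  omega

theorem coset_step {n : ℕ} (G : SimpleGraph (Fin n)) (F H : Set (Sym2 (Fin n)))
    (hF : F ⊆ G.edgeSet) (W : Set (Fin n)) (hH : H = symmDiff F (cutEdges G W)) (v : Fin n) :
    (symmDiff F (cutEdges G (symmDiff W {v}))).ncard + 2 * degOf H v
      = H.ncard + degOf G.edgeSet v := by
  rw [cutEdges_symmDiff, ← symmDiff_assoc, ← hH]
  apply ncard_symmDiff_cut_singleton
  rw [hH]
  intro e he
  rcases he with ⟨h, -⟩ | ⟨h, -⟩
  · exact hF h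
  · obtain ⟨x, y, rfl, hadj, -⟩ := h
    exact hadj

theorem min_max_of_cut_coset_degrees
    (n : ℕ) (G : SimpleGraph (Fin n)) (F : Set (Sym2 (Fin n))) (hF : F ⊆ G.edgeSet)
    (F' F'' : Set (Sym2 (Fin n)))
    (hF'mem : ∃ W : Set (Fin n), F' = symmDiff F (cutEdges G W))
    (hF'min : ∀ W : Set (Fin n), F'.ncard ≤ (symmDiff F (cutEdges G W)).ncard)
    (hF''mem : ∃ W : Set (Fin n), F'' = symmDiff F (cutEdges G W))
    (hF''max : ∀ W : Set (Fin n), (symmDiff F (cutEdges G W)).ncard ≤ F''.ncard) :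
    ∀ v : Fin n,
      (degOf F' v : ℤ) ≤ (degOf G.edgeSet v : ℤ) - (degOf F' v : ℤ) ∧
      (degOf F'' v : ℤ) ≥ (degOf G.edgeSet v : ℤ) - (degOf F'' v : ℤ) := by
  intro v
  obtain ⟨W, hW⟩ := hF'mem
  obtain ⟨U, hU⟩ := hF''mem
  have h1 := coset_step G F F' hF W hW v
  have h2 := coset_step G F F'' hF U hU v
  have h3 := hF'min (symmDiff W {v})
  have h4 := hF''max (symmDiff U {v})
  constructor <;> omega
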